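/- arXiv:2206.12868 — 8 statements merged into one kernel-verified Lean document; each statement's English description precedes it below -/
import Mathlib

section
/- Let (x₁, x₂) be a bivariate signal of length N, M a positive integer, and let (x'₁, x'₂) be its conjugate reflection, x'ᵢ[n] = conj(xᵢ[N−1−n]) for 0 ≤ n ≤ N−1. Then the spectral matrices of (x'₁, x'₂) and (x₁, x₂) coincide at every frequency index m < M if and only if Im(X̂₁[m]·conj(X̂₂[m])) = 0 for every m < M, i.e., if and only if the two Fourier components of (x₁, x₂) are in phase at every measured frequency. -/
open Matrix

/-- Discrete Fourier transform of a signal `x : Fin N → ℂ` at frequency index `m`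
(with `M` frequencies): `X̂[m] = ∑ₙ x[n]·exp(−2πi·m·n/M)`. -/
noncomputable def dft (N M : ℕ) (x : Fin N → ℂ) (m : ℕ) : ℂ :=
  ∑ n : Fin N, x n * Complex.exp (-(2 * Real.pi * Complex.I) * (m : ℂ) * ((n : ℕ) : ℂ) / (M : ℂ))

/-- The spectral matrix of a bivariate signal at frequency index `m`:
`𝔉[m]_{ij} = X̂ᵢ[m]·conj(X̂ⱼ[m])`. -/
noncomputable def specMat (N M : ℕ) (x : Fin 2 → Fin N → ℂ) (m : ℕ) :
    Matrix (Fin 2) (Fin 2) ℂ :=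
  Matrix.of fun i j => dft N M (x i) m * (starRingEnd ℂ) (dft N M (x j) m)

theorem dft_conjReflect (N M : ℕ) (x x' : Fin N → ℂ)
    (hx' : ∀ n : Fin N, x' n = (starRingEnd ℂ) (x n.rev)) (m : ℕ) :
    dft N M x' m = Complex.exp (-(2 * Real.pi * Complex.I) * (m : ℂ) * ((N : ℂ) - 1) / (M : ℂ))
      * (starRingEnd ℂ) (dft N M x m) := by
  unfold dft
  rw [map_sum, Finset.mul_sum, ← Equiv.sum_comp Fin.revPerm]
  refine Finset.sum_congr rfl fun n _ => ?_
  rw [Fin.revPerm_apply, hx', Fin.rev_rev, map_mul, ← Complex.exp_conj, mul_left_comm,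
    ← Complex.exp_add]
  congr 2
  have h : ((n.rev : ℕ) : ℂ) = (N : ℂ) - 1 - ((n : ℕ) : ℂ) := by
    rw [Fin.val_rev, Nat.cast_sub (by omega)]
    push_cast
    ring
  rw [h]
  simp only [map_div₀, map_mul, map_neg, Complex.conj_I, Complex.conj_ofReal, map_natCast,
    map_ofNat]
  ring

theorem phase_mul_conj (N M m : ℕ) :
    Complex.exp (-(2 * Real.pi * Complex.I) * (m : ℂ) * ((N : ℂ) - 1) / (M : ℂ)) *
    (starRingEnd ℂ)
      (Complex.exp (-(2 * Real.pi * Complex.I) * (m : ℂ) * ((N : ℂ) - 1) / (M : ℂ))) = 1 := by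
  rw [← Complex.exp_conj, ← Complex.exp_add]
  refine Eq.trans (congrArg Complex.exp ?_) Complex.exp_zero
  simp only [map_div₀, map_mul, map_neg, map_sub, map_one, Complex.conj_I, Complex.conj_ofReal,
    map_natCast, map_ofNat]
  ring

theorem specMat_conjReflect (N M : ℕ) (x x' : Fin 2 → Fin N → ℂ)
    (hx' : ∀ (i : Fin 2) (n : Fin N), x' i n = (starRingEnd ℂ) (x i n.rev)) (m : ℕ)
    (i j : Fin 2) : specMat N M x' m i j = (starRingEnd ℂ) (specMat N M x m i j) := by
  simp only [specMat, Matrix.of_apply]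
  rw [dft_conjReflect N M (x i) (x' i) (hx' i), dft_conjReflect N M (x j) (x' j) (hx' j),
    map_mul, map_mul, mul_mul_mul_comm, phase_mul_conj, one_mul]

/-- Conjugate reflection `x'ᵢ[n] = conj(xᵢ[N−1−n])` leaves all the
spectral matrices `𝔉[m]`, `m < M`, unchanged if and only if
`Im(X̂₁[m]·conj(X̂₂[m])) = 0` for every `m < M`, i.e. iff the two Fourier components
are in phase at every measured frequency. -/
theorem specMat_conjReflect_invariant_iff (N M : ℕ) (hN : 0 < N) (hM : 0 < M)
    (x x' : Fin 2 → Fin N → ℂ)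
    (hx' : ∀ (i : Fin 2) (n : Fin N), x' i n = (starRingEnd ℂ) (x i n.rev)) :
    (∀ m : Fin M, specMat N M x' (m : ℕ) = specMat N M x (m : ℕ))
      ↔ (∀ m : Fin M, (dft N M (x 0) (m : ℕ) * (starRingEnd ℂ) (dft N M (x 1) (m : ℕ))).im = 0) := by
  refine forall_congr' fun m => ?_
  constructor
  · intro h
    have h1 := specMat_conjReflect N M x x' hx' m 0 1
    rw [h] at h1
    exact Complex.conj_eq_iff_im.mp h1.symm
  · intro h
    have h1 := Complex.conj_eq_iff_im.mpr h
    ext i j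
    rw [specMat_conjReflect N M x x' hx']
    simp only [specMat, Matrix.of_apply]
    rw [map_mul, Complex.conj_conj] at h1
    fin_cases i <;> fin_cases j <;> simp only [map_mul, Complex.conj_conj]
    · exact mul_comm _ _
    · exact h1
    · show (starRingEnd ℂ) (dft N M (x 1) m) * dft N M (x 0) m
        = dft N M (x 1) m * (starRingEnd ℂ) (dft N M (x 0) m)
      rw [mul_comm, ← h1, mul_comm]
    · exact mul_comm _ _
end

section
/- Let x₁, x₂ : ℤ → ℂ be finitely supported signals, neither identically zero, let n₁, n₂ ∈ ℤ, and define the shifted signals x'₁[n] = x₁[n−n₁] and x'₂[n] = x₂[n−n₂]. Then the shifted pair has the same correlation functions as the original pair — γ_{x'ᵢ x'ⱼ}[n] = γ_{xᵢ xⱼ}[n] for all i, j ∈ {1,2} and all n ∈ ℤ — if and only if n₁ = n₂. -/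
/-- The correlation function of two finitely supported signals `u, v : ℤ → ℂ`:
`γ_{uv}[n] = ∑_{k∈ℤ} u[k+n]·conj(v[k])`. -/
noncomputable def corr (u v : ℤ → ℂ) (n : ℤ) : ℂ :=
  ∑' k : ℤ, u (k + n) * (starRingEnd ℂ) (v k)

theorem corr_shift_aux (u v : ℤ → ℂ) (a b n : ℤ) :
    corr (fun k => u (k - a)) (fun k => v (k - b)) n = corr u v (n + (b - a)) := by
  unfold corr
  rw [← (Equiv.addRight b).tsum_eq]
  refine tsum_congr fun k => ?_
  simp only [Equiv.coe_addRight]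
  congr 2
  · ring
  · congr 1
    ring

theorem corr_top_aux (u v : ℤ → ℂ)
    (hu : (Function.support u).Finite) (hv : (Function.support v).Finite)
    (hu0 : u ≠ 0) (hv0 : v ≠ 0) :
    ∃ D : ℤ, corr u v D ≠ 0 ∧ ∀ n, D < n → corr u v n = 0 := by
  obtain ⟨M, hM, hM'⟩ := Set.exists_max_image _ id hu (Function.support_nonempty_iff.2 hu0)
  obtain ⟨m, hm, hm'⟩ := Set.exists_min_image _ id hv (Function.support_nonempty_iff.2 hv0)
  simp only [Function.mem_support, id] at hM hM' hm hm'
  have hU : ∀ k, M < k → u k = 0 := fun k hk => by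
    by_contra h
    have := hM' k h
    omega
  have hV : ∀ k, k < m → v k = 0 := fun k hk => by
    by_contra h
    have := hm' k h
    omega
  refine ⟨M - m, ?_, fun n hn => ?_⟩
  · unfold corr
    rw [tsum_eq_single m]
    · have : m + (M - m) = M := by ring
      rw [this]
      exact mul_ne_zero hM (by simpa using hm)
    · intro k hk
      rcases lt_or_gt_of_ne hk with h | h
      · simp [hV k h]
      · rw [hU _ (by omega), zero_mul]
  · unfold corr
    rw [← tsum_zero (β := ℤ)]
    refine tsum_congr fun k => ?_
    rcases lt_or_ge k m with h | h
    · simp [hV k h]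
    · rw [hU _ (by omega), zero_mul]

/-- For finitely supported, not identically zero signals `x₁, x₂ : ℤ → ℂ`,
the pair of shifted signals `x'₁[n] = x₁[n−n₁]`, `x'₂[n] = x₂[n−n₂]` has the same
correlation functions `γ_{xᵢxⱼ}` as the original pair (for all `i, j ∈ {1,2}` and all `n`)
if and only if the shifts coincide: `n₁ = n₂`. -/
theorem corr_shift_invariant_iff (x₁ x₂ : ℤ → ℂ)
    (hfin₁ : (Function.support x₁).Finite) (hfin₂ : (Function.support x₂).Finite)
    (hx₁ : x₁ ≠ 0) (hx₂ : x₂ ≠ 0) (n₁ n₂ : ℤ) :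
    (∀ (i j : Fin 2) (n : ℤ),
        corr (fun k => ![x₁, x₂] i (k - ![n₁, n₂] i))
             (fun k => ![x₁, x₂] j (k - ![n₁, n₂] j)) n
          = corr (![x₁, x₂] i) (![x₁, x₂] j) n)
      ↔ n₁ = n₂ := by
  constructor
  · intro h
    obtain ⟨D, hD, hD'⟩ := corr_top_aux x₁ x₂ hfin₁ hfin₂ hx₁ hx₂
    have key : ∀ n, corr x₁ x₂ (n + (n₂ - n₁)) = corr x₁ x₂ n := fun n => by
      rw [← corr_shift_aux]
      exact h 0 1 n
    rcases lt_trichotomy n₁ n₂ with hlt | heq | hgt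
    · exact absurd ((key D).symm.trans (hD' _ (by omega))) hD
    · exact heq
    · have h1 := key (D - (n₂ - n₁))
      rw [sub_add_cancel] at h1
      exact absurd (h1.trans (hD' _ (by omega))) hD
  · rintro rfl i j n
    rw [corr_shift_aux]
    congr 1
    fin_cases i <;> fin_cases j <;> simp
end

section
/- Let N ≥ 1 and M ≥ 2N−1. Let (x₁, x₂) and (y₁, y₂) be bivariate signals of length N with generating polynomials X₁, X₂ and Y₁, Y₂ respectively. Then the spectral matrices of the two signals coincide at all frequency indices m = 0, …, M−1 if and only if their measurement polynomials coincide, i.e., Xᵢ·X̃ⱼ = Yᵢ·Ỹⱼ in ℂ[z] for all i, j ∈ {1,2}, where the tildes denote conjugate reflection at degree N−1. -/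
open Matrix Polynomial

/-- The generating polynomial of a signal `x : Fin N → ℂ`:
`X(z) = ∑_{n=0}^{N−1} x[n]·zⁿ`. -/
noncomputable def genPoly (N : ℕ) (x : Fin N → ℂ) : Polynomial ℂ :=
  ∑ n : Fin N, Polynomial.C (x n) * Polynomial.X ^ (n : ℕ)

/-- The conjugate reflection of a polynomial `A` at degree `D`:
`Ã(z) = ∑_{n=0}^{D} conj(A.coeff (D−n))·zⁿ`. -/
noncomputable def conjReflect (D : ℕ) (A : Polynomial ℂ) : Polynomial ℂ :=
  (A.map (starRingEnd ℂ)).reflect D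

/-- Sampling point on the unit circle. -/
noncomputable def samplePt (M m : ℕ) : ℂ :=
  Complex.exp (-(2 * Real.pi * Complex.I / (M : ℂ))) ^ m

lemma samplePt_mul_conj (M m : ℕ) :
    samplePt M m * (starRingEnd ℂ) (samplePt M m) = 1 := by
  have : ‖samplePt M m‖ = 1 := by
    have e : (-(2 * Real.pi * Complex.I / (M : ℂ))) =
        ((-(2 * Real.pi / M) : ℝ) : ℂ) * Complex.I := by
      push_cast; ring
    rw [samplePt, norm_pow, e, Complex.norm_exp_ofReal_mul_I, one_pow]
  rw [Complex.mul_conj, Complex.normSq_eq_norm_sq, this]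
  simp

lemma dft_eq_eval (N M : ℕ) (x : Fin N → ℂ) (m : ℕ) :
    dft N M x m = (genPoly N x).eval (samplePt M m) := by
  simp only [dft, genPoly, samplePt, eval_finset_sum, eval_mul, eval_C, eval_pow, eval_X]
  refine Finset.sum_congr rfl fun n _ => ?_
  rw [← Complex.exp_nat_mul, ← Complex.exp_nat_mul]
  congr 2
  ring

lemma natDegree_genPoly_le (N : ℕ) (x : Fin N → ℂ) : (genPoly N x).natDegree ≤ N - 1 := by
  refine natDegree_sum_le_of_forall_le _ _ fun n _ => ?_
  exact (natDegree_C_mul_X_pow_le _ _).trans (by omega)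

lemma natDegree_conjReflect_le (D : ℕ) (A : Polynomial ℂ) (h : A.natDegree ≤ D) :
    (conjReflect D A).natDegree ≤ D := by
  rw [natDegree_le_iff_coeff_eq_zero]
  intro n hn
  rw [conjReflect, coeff_reflect, revAt_eq_self_of_lt hn, coeff_map,
    coeff_eq_zero_of_natDegree_lt (by omega), map_zero]

lemma eval_conjReflect (D : ℕ) (A : Polynomial ℂ) (h : A.natDegree ≤ D) (z : ℂ)
    (hz : z * (starRingEnd ℂ) z = 1) :
    (conjReflect D A).eval z = z ^ D * (starRingEnd ℂ) (A.eval z) := by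
  letI : Invertible ((starRingEnd ℂ) z) := ⟨z, hz, by rw [mul_comm]; exact hz⟩
  have key := eval₂_reflect_mul_pow (RingHom.id ℂ) ((starRingEnd ℂ) z) D
    (A.map (starRingEnd ℂ)) (natDegree_map_le.trans h)
  have hinv : ⅟((starRingEnd ℂ) z) = z := rfl
  rw [hinv, eval₂_id, eval₂_id, eval_map, eval₂_at_apply] at key
  rw [← key, conjReflect]
  have : z ^ D * ((starRingEnd ℂ) z) ^ D = 1 := by rw [← mul_pow, hz, one_pow]
  linear_combination (-(eval z (reflect D (A.map (starRingEnd ℂ))))) * this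

lemma eval_measure (N M m : ℕ) (u v : Fin N → ℂ) :
    (genPoly N u * conjReflect (N - 1) (genPoly N v)).eval (samplePt M m) =
      samplePt M m ^ (N - 1) * (dft N M u m * (starRingEnd ℂ) (dft N M v m)) := by
  rw [eval_mul, eval_conjReflect _ _ (natDegree_genPoly_le N v) _ (samplePt_mul_conj M m),
    dft_eq_eval, dft_eq_eval]
  ring

lemma samplePt_injective (M : ℕ) (hM : M ≠ 0) :
    Function.Injective fun m : Fin M => samplePt M m := by
  intro a b hab
  have hp : IsPrimitiveRoot (Complex.exp (-(2 * Real.pi * Complex.I / (M : ℂ)))) M := by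
    rw [Complex.exp_neg]
    exact (Complex.isPrimitiveRoot_exp M hM).inv
  exact Fin.ext (hp.pow_inj a.2 b.2 hab)

/-- Theorem 1, BPR ⇔ PAF. For `M ≥ 2N−1`, two bivariate signals of
length `N` have the same spectral matrices at all frequency indices `m < M` if and only
if their measurement polynomials coincide: `Xᵢ·X̃ⱼ = Yᵢ·Ỹⱼ` for all `i, j ∈ {1,2}`. -/
theorem specMat_eq_iff_measurement_poly_eq (N M : ℕ) (hN : 1 ≤ N) (hM : 2 * N - 1 ≤ M)
    (x y : Fin 2 → Fin N → ℂ) :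
    (∀ m : Fin M, specMat N M x (m : ℕ) = specMat N M y (m : ℕ))
      ↔ (∀ i j : Fin 2,
          genPoly N (x i) * conjReflect (N - 1) (genPoly N (x j))
            = genPoly N (y i) * conjReflect (N - 1) (genPoly N (y j))) := by
  constructor
  · intro h i j
    have hd : ∀ w : Fin 2 → Fin N → ℂ,
        (genPoly N (w i) * conjReflect (N - 1) (genPoly N (w j))).natDegree < M := by
      intro w
      have h1 := natDegree_genPoly_le N (w i)
      have h2 := natDegree_conjReflect_le _ _ (natDegree_genPoly_le N (w j))
      have h3 := natDegree_mul_le (p := genPoly N (w i))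
        (q := conjReflect (N - 1) (genPoly N (w j)))
      omega
    refine eq_of_natDegree_lt_card_of_eval_eq _ _ (samplePt_injective M (by omega)) ?_ ?_
    · intro m
      have hm := congrFun (congrFun (h m) i) j
      simp only [specMat, Matrix.of_apply] at hm
      simp only [eval_measure, hm]
    · rw [Fintype.card_fin]
      exact max_lt (hd x) (hd y)
  · intro h m
    ext i j
    have hm := congrArg (eval (samplePt M m)) (h i j)
    rw [eval_measure, eval_measure] at hm
    have hz : samplePt M m ≠ 0 := left_ne_zero_of_mul_eq_one (samplePt_mul_conj M m)
    exact mul_left_cancel₀ (pow_ne_zero _ hz) hm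
end

section
/- Let N ≥ 1 and 0 ≤ D ≤ N−1. Let Q, R₁, R₂ ∈ ℂ[z] be nonzero with natDegree Q ≤ D and natDegree Rᵢ ≤ N−1−D, and set Xᵢ = Q·Rᵢ for i = 1,2. Assume R₁ and R₂ are coprime in ℂ[z], and that their conjugate reflections at degree N−1−D are coprime in ℂ[z]. Let Γᵢⱼ = Xᵢ·X̃ⱼ for i, j ∈ {1,2}, where X̃ⱼ is the conjugate reflection of Xⱼ at degree N−1. Then the greatest common divisor of Γ₁₁, Γ₁₂, Γ₂₁, Γ₂₂ in ℂ[z] is associated to Q·Q̃, where Q̃ is the conjugate reflection of Q at degree D; that is, gcd(Γ₁₁, Γ₁₂, Γ₂₁, Γ₂₂) = c·Q·Q̃ for some nonzero constant c ∈ ℂ. -/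
open Polynomial

theorem conjReflect_mul_aux (N D : ℕ) (hD : D ≤ N) (Q R : Polynomial ℂ)
    (hdQ : Q.natDegree ≤ D) (hdR : R.natDegree ≤ N - D) :
    conjReflect N (Q * R) = conjReflect D Q * conjReflect (N - D) R := by
  unfold conjReflect
  have h := reflect_mul (Q.map (starRingEnd ℂ)) (R.map (starRingEnd ℂ))
    (natDegree_map_le.trans hdQ) (natDegree_map_le.trans hdR)
  rw [Nat.add_sub_cancel' hD] at h
  rw [Polynomial.map_mul, h]

/-- Lemma 2, part 1. If `Xᵢ = Q·Rᵢ` with `R₁, R₂` coprime and their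
conjugate reflections coprime, then the GCD of the four measurement polynomials
`Γᵢⱼ = Xᵢ·X̃ⱼ` is associated to `Q·Q̃`: it equals `c·Q·Q̃` for some nonzero `c ∈ ℂ`. -/
theorem gcd_measurement_polys_eq_Q_mul_conjReflect_Q
    (N D : ℕ) (hN : 1 ≤ N) (hD : D ≤ N - 1)
    (Q R₁ R₂ : Polynomial ℂ) (hQ : Q ≠ 0) (hR₁ : R₁ ≠ 0) (hR₂ : R₂ ≠ 0)
    (hdQ : Q.natDegree ≤ D)
    (hdR₁ : R₁.natDegree ≤ N - 1 - D) (hdR₂ : R₂.natDegree ≤ N - 1 - D)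
    (hcop : IsCoprime R₁ R₂)
    (hcopR : IsCoprime (conjReflect (N - 1 - D) R₁) (conjReflect (N - 1 - D) R₂)) :
    ∃ c : ℂ, c ≠ 0 ∧
      EuclideanDomain.gcd (Q * R₁ * conjReflect (N - 1) (Q * R₁))
        (EuclideanDomain.gcd (Q * R₁ * conjReflect (N - 1) (Q * R₂))
          (EuclideanDomain.gcd (Q * R₂ * conjReflect (N - 1) (Q * R₁))
            (Q * R₂ * conjReflect (N - 1) (Q * R₂))))
      = Polynomial.C c * (Q * conjReflect D Q) := by
  rw [conjReflect_mul_aux (N - 1) D hD Q R₁ hdQ hdR₁,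
    conjReflect_mul_aux (N - 1) D hD Q R₂ hdQ hdR₂]
  generalize conjReflect (N - 1 - D) R₁ = S₁ at *
  generalize conjReflect (N - 1 - D) R₂ = S₂ at *
  generalize conjReflect D Q = T at *
  obtain ⟨a, b, hab⟩ := hcop
  obtain ⟨c, d, hcd⟩ := hcopR
  set g := EuclideanDomain.gcd (Q * R₁ * (T * S₁))
    (EuclideanDomain.gcd (Q * R₁ * (T * S₂))
      (EuclideanDomain.gcd (Q * R₂ * (T * S₁)) (Q * R₂ * (T * S₂)))) with hg
  have h1 : Q * T ∣ g := by
    refine EuclideanDomain.dvd_gcd ⟨R₁ * S₁, by ring⟩ (EuclideanDomain.dvd_gcd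
      ⟨R₁ * S₂, by ring⟩ (EuclideanDomain.dvd_gcd ⟨R₂ * S₁, by ring⟩ ⟨R₂ * S₂, by ring⟩))
  have e1 : g ∣ Q * R₁ * (T * S₁) := EuclideanDomain.gcd_dvd_left _ _
  have e := EuclideanDomain.gcd_dvd_right (Q * R₁ * (T * S₁))
    (EuclideanDomain.gcd (Q * R₁ * (T * S₂))
      (EuclideanDomain.gcd (Q * R₂ * (T * S₁)) (Q * R₂ * (T * S₂))))
  rw [← hg] at e
  have e2 : g ∣ Q * R₁ * (T * S₂) := e.trans (EuclideanDomain.gcd_dvd_left _ _)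
  have e' := e.trans (EuclideanDomain.gcd_dvd_right _ _)
  have e3 : g ∣ Q * R₂ * (T * S₁) := e'.trans (EuclideanDomain.gcd_dvd_left _ _)
  have e4 : g ∣ Q * R₂ * (T * S₂) := e'.trans (EuclideanDomain.gcd_dvd_right _ _)
  have h2 : g ∣ Q * T := by
    have : Q * T = (a * c) * (Q * R₁ * (T * S₁)) + (a * d) * (Q * R₁ * (T * S₂))
        + (b * c) * (Q * R₂ * (T * S₁)) + (b * d) * (Q * R₂ * (T * S₂)) := by
      calc Q * T = Q * T * ((a * R₁ + b * R₂) * (c * S₁ + d * S₂)) := by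
            rw [hab, hcd]; ring
        _ = _ := by ring
    rw [this]
    exact dvd_add (dvd_add (dvd_add (e1.mul_left _) (e2.mul_left _)) (e3.mul_left _))
      (e4.mul_left _)
  obtain ⟨u, hu⟩ := associated_of_dvd_dvd h1 h2
  obtain ⟨k, hk, hk'⟩ := Polynomial.isUnit_iff.1 u.isUnit
  exact ⟨k, hk.ne_zero, by rw [← hu, ← hk', mul_comm]⟩
end

section
/- Let L ≥ 1 and let A, B ∈ ℂ[z] be nonzero polynomials with natDegree A ≤ L and natDegree B ≤ L. Define K = natDegree(gcd(A, B)) + min(L − natDegree A, L − natDegree B) (the extended degree of the greatest common divisor, which counts common roots at infinity). Then the 2L × 2L Sylvester matrix S₁(A, B) has rank 2L − K. In particular, S₁(A, B) is rank deficient if and only if A and B have a common root in ℂ or both natDegree A < L and natDegree B < L. -/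
open Polynomial Matrix

/-- The Sylvester-type matrix `S_D(A, B)` for polynomials of degree at most `L`,
parameterized by `d = L − D` (so that `D = L − d`): it has `L + d + 1 = 2L − D + 1` rows
and `2(d + 1) = 2(L − D + 1)` columns. Columns `0, …, d` hold shifted copies of the
coefficient vector of `A`, columns `d+1, …, 2d+1` hold shifted copies of the coefficient
vector of `B`. -/
noncomputable def sylv (L d : ℕ) (A B : Polynomial ℂ) :
    Matrix (Fin (L + d + 1)) (Fin (2 * (d + 1))) ℂ :=
  Matrix.of fun i j =>
    if (j : ℕ) ≤ d then
      (if (j : ℕ) ≤ (i : ℕ) then A.coeff ((i : ℕ) - (j : ℕ)) else 0)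
    else
      (if (j : ℕ) - (d + 1) ≤ (i : ℕ) then B.coeff ((i : ℕ) - ((j : ℕ) - (d + 1))) else 0)

theorem sylv_mulVec_aux (L d : ℕ) (A B P Q : Polynomial ℂ)
    (hP : P.natDegree < d + 1) (hQ : Q.natDegree < d + 1)
    (v : Fin (2 * (d + 1)) → ℂ)
    (hv : ∀ j : Fin (2 * (d + 1)), v j =
      if (j : ℕ) ≤ d then P.coeff j else Q.coeff ((j : ℕ) - (d + 1)))
    (i : Fin (L + d + 1)) :
    (sylv L d A B *ᵥ v) i = (P * A + Q * B).coeff i := by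
  have key : ∀ (R E : Polynomial ℂ), R.natDegree < d + 1 → (R * E).coeff (i : ℕ) =
      ∑ j ∈ Finset.range (d + 1),
        (if j ≤ (i : ℕ) then E.coeff ((i : ℕ) - j) else 0) * R.coeff j := by
    intro R E hR
    conv_lhs => rw [R.as_sum_range_C_mul_X_pow' hR]
    rw [Finset.sum_mul, finsetSum_coeff]
    refine Finset.sum_congr rfl fun j _ => ?_
    rw [mul_assoc, coeff_C_mul, coeff_X_pow_mul', mul_comm]
  rw [coeff_add, key P A hP, key Q B hQ]
  simp only [Matrix.mulVec, dotProduct, hv, sylv, Matrix.of_apply]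
  rw [Finset.sum_fin_eq_sum_range, two_mul, Finset.sum_range_add]
  congr 1
  · refine Finset.sum_congr rfl fun j hj => ?_
    rw [Finset.mem_range] at hj
    rw [dif_pos (by omega)]
    simp [show j ≤ d by omega]
  · refine Finset.sum_congr rfl fun j hj => ?_
    rw [Finset.mem_range] at hj
    rw [dif_pos (by omega)]
    simp [show ¬ (d + 1 + j ≤ d) by omega]

theorem natDegree_trunc_aux (d : ℕ) (f : ℕ → ℂ) :
    (∑ j ∈ Finset.range (d + 1), monomial j (f j)).natDegree < d + 1 := by
  apply Nat.lt_succ_of_le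
  apply natDegree_sum_le_of_forall_le
  intro j hj
  rw [Finset.mem_range] at hj
  exact (natDegree_monomial_le _).trans (by omega)

theorem coeff_trunc_aux (d : ℕ) (f : ℕ → ℂ) (k : ℕ) (hk : k < d + 1) :
    (∑ j ∈ Finset.range (d + 1), monomial j (f j)).coeff k = f k := by
  simp [finsetSum_coeff, coeff_monomial, hk]

/-- parametrisation of the kernel -/
noncomputable def kerParam (d K : ℕ) (A' B' : Polynomial ℂ) :
    degreeLT ℂ K →ₗ[ℂ] (Fin (2 * (d + 1)) → ℂ) where
  toFun t j := if (j : ℕ) ≤ d then ((t : ℂ[X]) * B').coeff j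
    else (-((t : ℂ[X]) * A')).coeff ((j : ℕ) - (d + 1))
  map_add' s t := by
    ext j
    simp only [Submodule.coe_add, add_mul, coeff_add, coeff_neg, Pi.add_apply]
    split_ifs <;> ring
  map_smul' c t := by
    ext j
    simp only [Submodule.coe_smul, smul_mul_assoc, coeff_smul, coeff_neg, Pi.smul_apply,
      RingHom.id_apply, smul_eq_mul]
    split_ifs <;> ring

theorem natDegree_mul_lt_aux (d K : ℕ) (t E : Polynomial ℂ) (ht : t ∈ degreeLT ℂ K)
    (hE : E ≠ 0) (hK : K + E.natDegree ≤ d + 1) : (t * E).natDegree < d + 1 := by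
  by_cases h0 : t = 0
  · simp [h0]
  · rw [mem_degreeLT, ← natDegree_lt_iff_degree_lt h0] at ht
    rw [natDegree_mul h0 hE]
    omega

theorem finrank_ker_aux (d : ℕ) (A B : Polynomial ℂ)
    (hA : A ≠ 0) (hB : B ≠ 0) (hdA : A.natDegree ≤ d + 1) (hdB : B.natDegree ≤ d + 1) :
    Module.finrank ℂ (LinearMap.ker (sylv (d + 1) d A B).mulVecLin) =
      (EuclideanDomain.gcd A B).natDegree
            + min (d + 1 - A.natDegree) (d + 1 - B.natDegree) := by
  obtain ⟨A', hA'⟩ := EuclideanDomain.gcd_dvd_left A B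
  obtain ⟨B', hB'⟩ := EuclideanDomain.gcd_dvd_right A B
  have hcop : IsCoprime A' B' := by
    have hg0 : EuclideanDomain.gcd A B ≠ 0 := fun h => hA (by rw [hA', h, zero_mul])
    refine ⟨EuclideanDomain.gcdA A B, EuclideanDomain.gcdB A B, ?_⟩
    have h := EuclideanDomain.gcd_eq_gcd_ab A B
    apply mul_left_cancel₀ hg0
    conv_rhs => rw [mul_one, h]
    conv_rhs => rw [show A * EuclideanDomain.gcdA A B =
      EuclideanDomain.gcd A B * A' * EuclideanDomain.gcdA A B by rw [← hA'],
      show B * EuclideanDomain.gcdB A B =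
      EuclideanDomain.gcd A B * B' * EuclideanDomain.gcdB A B by rw [← hB']]
    ring
  generalize EuclideanDomain.gcd A B = g at *
  have hg0 : g ≠ 0 := fun h => hA (by rw [hA', h, zero_mul])
  have hA0 : A' ≠ 0 := fun h => hA (by rw [hA', h, mul_zero])
  have hB0 : B' ≠ 0 := fun h => hB (by rw [hB', h, mul_zero])
  have hdegA : A.natDegree = g.natDegree + A'.natDegree := by rw [hA', natDegree_mul hg0 hA0]
  have hdegB : B.natDegree = g.natDegree + B'.natDegree := by rw [hB', natDegree_mul hg0 hB0]
  obtain ⟨K, hK⟩ : ∃ K, K = g.natDegree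
            + min (d + 1 - A.natDegree) (d + 1 - B.natDegree) := ⟨_, rfl⟩
  rw [← hK]
  have hKA : K + A'.natDegree ≤ d + 1 := by omega
  have hKB : K + B'.natDegree ≤ d + 1 := by omega
  have hinj : Function.Injective (kerParam d K A' B') := by
    rw [← LinearMap.ker_eq_bot, LinearMap.ker_eq_bot']
    intro t ht
    have h1 : (t : ℂ[X]) * B' = 0 := by
      ext k
      by_cases hk : k < d + 1
      · have := congrFun ht ⟨k, by omega⟩
        simpa [kerParam, show k ≤ d by omega] using this
      · rw [coeff_eq_zero_of_natDegree_lt, coeff_zero]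
        have := natDegree_mul_lt_aux d K t B' t.2 hB0 hKB
        omega
    exact Subtype.ext ((mul_eq_zero.mp h1).resolve_right hB0)
  have hrange : LinearMap.range (kerParam d K A' B') =
      LinearMap.ker (sylv (d + 1) d A B).mulVecLin := by
    apply le_antisymm
    · rintro _ ⟨t, rfl⟩
      rw [LinearMap.mem_ker, Matrix.mulVecLin_apply]
      ext i
      rw [sylv_mulVec_aux (d + 1) d A B ((t : ℂ[X]) * B') (-((t : ℂ[X]) * A'))
        (natDegree_mul_lt_aux d K t B' t.2 hB0 hKB)
        (by rw [natDegree_neg]; exact natDegree_mul_lt_aux d K t A' t.2 hA0 hKA)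
        (kerParam d K A' B' t)
        (fun j => rfl)]
      rw [hA', hB', show (t : ℂ[X]) * B' * (g * A') + -((t : ℂ[X]) * A') * (g * B') = 0 by ring]
      simp
    · intro v hv
      rw [LinearMap.mem_ker, Matrix.mulVecLin_apply] at hv
      let f : ℕ → ℂ := fun k => if h : k < 2 * (d + 1) then v ⟨k, h⟩ else 0
      obtain ⟨P, hP⟩ : ∃ P : ℂ[X], P = ∑ j ∈ Finset.range (d + 1), monomial j (f j) := ⟨_, rfl⟩
      obtain ⟨Q, hQ⟩ : ∃ Q : ℂ[X], Q =
        ∑ j ∈ Finset.range (d + 1), monomial j (f (d + 1 + j)) := ⟨_, rfl⟩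
      have hPd : P.natDegree < d + 1 := hP ▸ natDegree_trunc_aux d f
      have hQd : Q.natDegree < d + 1 := hQ ▸ natDegree_trunc_aux d (fun j => f (d + 1 + j))
      have hvj : ∀ j : Fin (2 * (d + 1)), v j =
          if (j : ℕ) ≤ d then P.coeff j else Q.coeff ((j : ℕ) - (d + 1)) := by
        intro j
        have hj := j.2
        split_ifs with h
        · rw [hP, coeff_trunc_aux d f _ (by omega)]
          simp [f]
        · rw [hQ, coeff_trunc_aux d (fun j => f (d + 1 + j)) _ (by omega)]
          simp only [f]
          rw [dif_pos (by omega)]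
          congr 1
          ext
          simp only
          omega
      have hz : P * A + Q * B = 0 := by
        ext k
        by_cases hk : k < d + 1 + d + 1
        · have := sylv_mulVec_aux (d + 1) d A B P Q hPd hQd v hvj ⟨k, hk⟩
          rw [hv] at this
          simpa using this.symm
        · rw [coeff_eq_zero_of_natDegree_lt, coeff_zero]
          have h1 : (P * A).natDegree ≤ P.natDegree + A.natDegree := natDegree_mul_le
          have h2 : (Q * B).natDegree ≤ Q.natDegree + B.natDegree := natDegree_mul_le
          have h3 := natDegree_add_le (P * A) (Q * B)
          omega
      have hz' : P * A' + Q * B' = 0 := by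
        apply mul_left_cancel₀ hg0
        rw [mul_zero, ← hz, hA', hB']
        ring
      have hdvd : B' ∣ P := by
        refine hcop.symm.dvd_of_dvd_mul_right ⟨-Q, ?_⟩
        linear_combination hz'
      obtain ⟨t, ht⟩ := hdvd
      have hQt : Q = -(t * A') := by
        apply mul_right_cancel₀ hB0
        rw [ht] at hz'
        linear_combination hz'
      have htm : t ∈ degreeLT ℂ K := by
        by_cases h0 : t = 0
        · rw [h0]; exact Submodule.zero_mem _
        · rw [mem_degreeLT, ← natDegree_lt_iff_degree_lt h0]
          rw [ht, natDegree_mul hB0 h0] at hPd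
          rw [hQt, natDegree_neg, natDegree_mul h0 hA0] at hQd
          omega
      refine ⟨⟨t, htm⟩, ?_⟩
      ext j
      rw [hvj j, ht, hQt, mul_comm B' t]
      rfl
  rw [← hrange, LinearMap.finrank_range_of_inj hinj, (degreeLTEquiv ℂ K).finrank_eq]
  simp

/-- Sylvester's theorem, extended-degree form. For nonzero polynomials
`A, B` of degree at most `L`, the `2L × 2L` Sylvester matrix `S₁(A, B) = sylv L (L−1) A B`
has rank `2L − K`, where `K = natDegree (gcd A B) + min (L − natDegree A) (L − natDegree B)`
is the extended degree of the GCD (counting common roots at infinity). In particular,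
`S₁(A, B)` is rank deficient iff `A` and `B` have a common root in `ℂ` or both have
degree strictly less than `L`. -/
theorem sylvester_rank (L : ℕ) (hL : 1 ≤ L) (A B : Polynomial ℂ)
    (hA : A ≠ 0) (hB : B ≠ 0) (hdA : A.natDegree ≤ L) (hdB : B.natDegree ≤ L) :
    (sylv L (L - 1) A B).rank
        = 2 * L - ((EuclideanDomain.gcd A B).natDegree
            + min (L - A.natDegree) (L - B.natDegree))
      ∧ ((sylv L (L - 1) A B).rank < 2 * L ↔
          (∃ α : ℂ, A.eval α = 0 ∧ B.eval α = 0)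
            ∨ (A.natDegree < L ∧ B.natDegree < L)) := by
  obtain ⟨d, rfl⟩ : ∃ d, L = d + 1 := ⟨L - 1, by omega⟩
  have hker := finrank_ker_aux d A B hA hB hdA hdB
  have hrn := LinearMap.finrank_range_add_finrank_ker (sylv (d + 1) d A B).mulVecLin
  rw [hker, Module.finrank_fintype_fun_eq_card, Fintype.card_fin] at hrn
  have hrank : (sylv (d + 1) (d + 1 - 1) A B).rank =
      Module.finrank ℂ (LinearMap.range (sylv (d + 1) d A B).mulVecLin) := rfl
  have hroot : (∃ α : ℂ, A.eval α = 0 ∧ B.eval α = 0) ↔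
      0 < (EuclideanDomain.gcd A B).natDegree := by
    have hg0 : EuclideanDomain.gcd A B ≠ 0 := fun h =>
      hA (EuclideanDomain.gcd_eq_zero_iff.mp h).1
    constructor
    · rintro ⟨α, h1, h2⟩
      have h3 : (X - C α) ∣ EuclideanDomain.gcd A B :=
        EuclideanDomain.dvd_gcd (dvd_iff_isRoot.mpr h1) (dvd_iff_isRoot.mpr h2)
      have := natDegree_le_of_dvd h3 hg0
      rw [natDegree_X_sub_C] at this
      omega
    · intro h
      obtain ⟨α, hα⟩ := IsAlgClosed.exists_root (EuclideanDomain.gcd A B)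
        (natDegree_pos_iff_degree_pos.mp h).ne'
      exact ⟨α, hα.dvd (EuclideanDomain.gcd_dvd_left A B),
        hα.dvd (EuclideanDomain.gcd_dvd_right A B)⟩
  rw [hrank, hroot]
  constructor
  · omega
  · omega
end

section
/- Let L ≥ 1 and let A, B ∈ ℂ[z] with natDegree A = natDegree B = L. Let H = gcd(A, B), K = natDegree H, and let F = A/H and G = B/H be the quotient polynomials. Then: (1) the Sylvester subresultant matrix S_K(A, B), of size (2L−K+1) × 2(L−K+1), has rank 2(L−K+1) − 1, so its right kernel has dimension one; (2) for any vectors u, v ∈ ℂ^{L−K+1} such that the stacked vector (u, v) ∈ ℂ^{2(L−K+1)} lies in the right kernel of S_K(A, B), the polynomials U(z) = ∑_k u[k]·z^k and V(z) = ∑_k v[k]·z^k satisfy U = −c·G and V = c·F for some constant c ∈ ℂ. -/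
open Polynomial Matrix

lemma sylv_mulVec_aux_s14 (L d : ℕ) (A B : Polynomial ℂ) (W : ℕ → ℂ) (i : Fin (L + d + 1)) :
    (sylv L d A B *ᵥ (fun j => W (j : ℕ))) i =
      (A * (∑ k ∈ Finset.range (d + 1), C (W k) * X ^ k) +
        B * (∑ k ∈ Finset.range (d + 1), C (W (d + 1 + k)) * X ^ k)).coeff (i : ℕ) := by
  have h1 : (sylv L d A B *ᵥ (fun j => W (j : ℕ))) i =
      ∑ j ∈ Finset.range (2 * (d + 1)), (if j ≤ d then
      (if j ≤ (i : ℕ) then A.coeff ((i : ℕ) - j) else 0)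
    else
      (if j - (d + 1) ≤ (i : ℕ) then B.coeff ((i : ℕ) - (j - (d + 1))) else 0)) * W j := by
    rw [Finset.sum_range]
    rfl
  have key : ∀ (P : Polynomial ℂ) (w : ℕ → ℂ),
      (P * (∑ k ∈ Finset.range (d + 1), C (w k) * X ^ k)).coeff (i : ℕ) =
      ∑ k ∈ Finset.range (d + 1), (if k ≤ (i : ℕ) then P.coeff ((i : ℕ) - k) else 0) * w k := by
    intro P w
    rw [Finset.mul_sum, finsetSum_coeff]
    refine Finset.sum_congr rfl fun k _ => ?_
    rw [show P * (C (w k) * X ^ k) = C (w k) * (P * X ^ k) by ring, coeff_C_mul,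
      coeff_mul_X_pow', mul_comm]
  rw [h1, coeff_add, key, key, two_mul, Finset.sum_range_add]
  congr 1
  · refine Finset.sum_congr rfl fun k hk => ?_
    rw [if_pos (by have := Finset.mem_range.1 hk; omega)]
  · refine Finset.sum_congr rfl fun k hk => ?_
    rw [if_neg (by omega), Nat.add_sub_cancel_left]

lemma natDegree_sum_aux (d : ℕ) (w : ℕ → ℂ) :
    (∑ k ∈ Finset.range (d + 1), C (w k) * X ^ k : Polynomial ℂ).natDegree ≤ d := by
  refine natDegree_sum_le_of_forall_le _ _ fun k hk => ?_
  have := Finset.mem_range.1 hk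
  exact (natDegree_C_mul_X_pow_le _ _).trans (by omega)

lemma sylv_ker_iff (L d : ℕ) (A B : Polynomial ℂ) (hA : A.natDegree ≤ L) (hB : B.natDegree ≤ L)
    (W : ℕ → ℂ) :
    sylv L d A B *ᵥ (fun j => W (j : ℕ)) = 0 ↔
      A * (∑ k ∈ Finset.range (d + 1), C (W k) * X ^ k) +
        B * (∑ k ∈ Finset.range (d + 1), C (W (d + 1 + k)) * X ^ k) = 0 := by
  constructor
  · intro h
    ext n
    rw [coeff_zero]
    by_cases hn : n < L + d + 1
    · have := congrFun h ⟨n, hn⟩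
      rw [sylv_mulVec_aux_s14] at this
      simpa using this
    · apply coeff_eq_zero_of_natDegree_lt
      refine lt_of_le_of_lt (natDegree_add_le_of_degree_le
        (natDegree_mul_le_of_le hA (natDegree_sum_aux d _))
        (natDegree_mul_le_of_le hB (natDegree_sum_aux d _))) (by omega)
  · intro h
    funext i
    rw [sylv_mulVec_aux_s14, h]
    simp

lemma poly_ker (d : ℕ) (H F G U V : Polynomial ℂ) (hH : H ≠ 0) (hF0 : F ≠ 0)
    (hcop : IsCoprime F G) (hF : F.natDegree = d) (hV : V.natDegree ≤ d)
    (h : H * F * U + H * G * V = 0) : ∃ c : ℂ, U = -(C c) * G ∧ V = C c * F := by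
  have h1 : F * U + G * V = 0 := by
    apply (mul_eq_zero.1 (show H * (F * U + G * V) = 0 by rw [← h]; ring)).resolve_left hH
  have h2 : F ∣ V := hcop.dvd_of_dvd_mul_left ⟨-U, by linear_combination h1⟩
  obtain ⟨Q, rfl⟩ := h2
  have hQ : ∃ c, Q = C c := by
    by_cases hQ0 : Q = 0
    · exact ⟨0, by simp [hQ0]⟩
    · rw [natDegree_mul hF0 hQ0] at hV
      exact ⟨_, eq_C_of_natDegree_eq_zero (by omega)⟩
  obtain ⟨c, rfl⟩ := hQ
  refine ⟨c, ?_, by ring⟩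
  apply mul_left_cancel₀ hF0
  linear_combination h1

/-- right kernel of the Sylvester subresultant matrix. Let `A, B` be
polynomials of degree exactly `L`, `H = gcd(A,B)`, `K = natDegree H`, and `F = A/H`,
`G = B/H` the quotients. Then the subresultant matrix `S_K(A,B) = sylv L (L−K) A B` has
rank `2(L−K+1) − 1` (one-dimensional right kernel), and any stacked vector `(u, v)` in
its right kernel yields polynomials `U = −c·G` and `V = c·F` for some constant `c`. -/
theorem sylvester_subresultant_right_kernel (L : ℕ) (hL : 1 ≤ L)
    (A B : Polynomial ℂ) (hdA : A.natDegree = L) (hdB : B.natDegree = L)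
    (K : ℕ) (hK : K = (EuclideanDomain.gcd A B).natDegree)
    (F G : Polynomial ℂ)
    (hF : A = EuclideanDomain.gcd A B * F) (hG : B = EuclideanDomain.gcd A B * G) :
    (sylv L (L - K) A B).rank = 2 * (L - K + 1) - 1
    ∧ ∀ u v : Fin (L - K + 1) → ℂ,
        (sylv L (L - K) A B) *ᵥ
          (fun j : Fin (2 * ((L - K) + 1)) =>
            if h : (j : ℕ) < L - K + 1 then u ⟨(j : ℕ), h⟩
            else v ⟨(j : ℕ) - (L - K + 1), by have := j.isLt; omega⟩) = 0 →
        ∃ c : ℂ,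
          (∑ k : Fin (L - K + 1), Polynomial.C (u k) * Polynomial.X ^ (k : ℕ))
              = -(Polynomial.C c) * G
          ∧ (∑ k : Fin (L - K + 1), Polynomial.C (v k) * Polynomial.X ^ (k : ℕ))
              = Polynomial.C c * F := by
  have hA0 : A ≠ 0 := by rintro rfl; simp at hdA; omega
  have hH0 : EuclideanDomain.gcd A B ≠ 0 := by
    intro h; rw [h, zero_mul] at hF; exact hA0 hF
  have hcop : IsCoprime F G := by
    obtain ⟨x, y, hxy⟩ : ∃ x y, EuclideanDomain.gcd A B = A * x + B * y :=
      ⟨_, _, EuclideanDomain.gcd_eq_gcd_ab A B⟩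
    generalize EuclideanDomain.gcd A B = H at *
    refine ⟨x, y, mul_left_cancel₀ hH0 ?_⟩
    rw [hF, hG] at hxy
    linear_combination -hxy
  generalize EuclideanDomain.gcd A B = H at *
  have hF0 : F ≠ 0 := by rintro rfl; simp at hF; exact hA0 hF
  have hB0 : B ≠ 0 := by rintro rfl; simp at hdB; omega
  have hG0 : G ≠ 0 := by rintro rfl; simp at hG; exact hB0 hG
  have hFd : F.natDegree = L - K := by
    have := natDegree_mul hH0 hF0
    rw [← hF] at this; omega
  have hGd : G.natDegree = L - K := by
    have := natDegree_mul hH0 hG0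
    rw [← hG] at this; omega
  clear hL
  suffices hgen : ∀ d : ℕ, F.natDegree = d → G.natDegree = d →
      ((sylv L d A B).rank = 2 * (d + 1) - 1
      ∧ ∀ u v : Fin (d + 1) → ℂ,
        (sylv L d A B) *ᵥ
          (fun j : Fin (2 * (d + 1)) =>
            if h : (j : ℕ) < d + 1 then u ⟨(j : ℕ), h⟩
            else v ⟨(j : ℕ) - (d + 1), by have := j.isLt; omega⟩) = 0 →
        ∃ c : ℂ,
          (∑ k : Fin (d + 1), Polynomial.C (u k) * Polynomial.X ^ (k : ℕ))
              = -(Polynomial.C c) * G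
          ∧ (∑ k : Fin (d + 1), Polynomial.C (v k) * Polynomial.X ^ (k : ℕ))
              = Polynomial.C c * F) from hgen (L - K) hFd hGd
  clear hFd hGd
  intro d hFd hGd
  have main : ∀ W : ℕ → ℂ, sylv L d A B *ᵥ (fun j => W (j : ℕ)) = 0 →
      ∃ c : ℂ, (∑ k ∈ Finset.range (d + 1), C (W k) * X ^ k) = -(C c) * G ∧
        (∑ k ∈ Finset.range (d + 1), C (W (d + 1 + k)) * X ^ k) = C c * F := by
    intro W hW
    rw [sylv_ker_iff L d A B hdA.le hdB.le] at hW
    refine poly_ker d H F G _ _ hH0 hF0 hcop hFd (natDegree_sum_aux d _) ?_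
    rw [← hF, ← hG]; exact hW
  have hcoef : ∀ (w : ℕ → ℂ) (n : ℕ), n < d + 1 →
      (∑ k ∈ Finset.range (d + 1), C (w k) * X ^ k : Polynomial ℂ).coeff n = w n := by
    intro w n hn
    simp [finsetSum_coeff, coeff_C_mul, coeff_X_pow]
    intro h; omega
  constructor
  · -- the spanning kernel vector
    let W0 : ℕ → ℂ := fun j => if j ≤ d then -(G.coeff j) else F.coeff (j - (d + 1))
    have hU0 : (∑ k ∈ Finset.range (d + 1), C (W0 k) * X ^ k : Polynomial ℂ) = -G := by
      conv_rhs => rw [G.as_sum_range_C_mul_X_pow, hGd, ← Finset.sum_neg_distrib]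
      refine Finset.sum_congr rfl fun k hk => ?_
      have := Finset.mem_range.1 hk
      simp [W0, show k ≤ d by omega]
    have hV0 : (∑ k ∈ Finset.range (d + 1), C (W0 (d + 1 + k)) * X ^ k : Polynomial ℂ) = F := by
      conv_rhs => rw [F.as_sum_range_C_mul_X_pow, hFd]
      refine Finset.sum_congr rfl fun k hk => ?_
      simp [W0, show ¬ (d + 1 + k ≤ d) by omega]
    have hker0 : sylv L d A B *ᵥ (fun j => W0 (j : ℕ)) = 0 := by
      rw [sylv_ker_iff L d A B hdA.le hdB.le, hU0, hV0, hF, hG]; ring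
    have hfin : Module.finrank ℂ (LinearMap.ker (sylv L d A B).mulVecLin) = 1 := by
      rw [finrank_eq_one_iff']
      refine ⟨⟨fun j => W0 (j : ℕ), by simpa using hker0⟩, ?_, ?_⟩
      · intro h
        have h' := congrFun (congrArg Subtype.val h) ⟨d + 1 + d, by omega⟩
        have : F.coeff d = 0 := by
          simpa [W0, show ¬ (d + 1 + d ≤ d) by omega] using h'
        rw [← hFd] at this
        exact hF0 (leadingCoeff_eq_zero.1 this)
      · rintro ⟨w, hw⟩
        let W : ℕ → ℂ := fun j => if h : j < 2 * (d + 1) then w ⟨j, h⟩ else 0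
        have hWw : w = fun j : Fin (2 * (d + 1)) => W (j : ℕ) := by
          funext j; simp [W]
        have hw' : sylv L d A B *ᵥ (fun j => W (j : ℕ)) = 0 := by
          rw [← hWw]; simpa using hw
        obtain ⟨c, h1, h2⟩ := main W hw'
        refine ⟨c, Subtype.ext ?_⟩
        change (c • fun j : Fin (2 * (d + 1)) => W0 (j : ℕ)) = w
        rw [hWw]
        funext j
        have hj := j.isLt
        simp only [Pi.smul_apply, smul_eq_mul]
        by_cases hjd : (j : ℕ) ≤ d
        · have e := hcoef W j (by omega)
          rw [h1, ← C_neg, coeff_C_mul] at e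
          rw [← e]; simp [W0, hjd]
        · have e := hcoef (fun k => W (d + 1 + k)) (j - (d + 1)) (by omega)
          rw [h2, coeff_C_mul] at e
          simp only [show d + 1 + ((j : ℕ) - (d + 1)) = j by omega] at e
          rw [← e]; simp [W0, hjd]
    have hrn := LinearMap.finrank_range_add_finrank_ker (sylv L d A B).mulVecLin
    rw [hfin, Module.finrank_fin_fun] at hrn
    unfold Matrix.rank
    omega
  · intro u v huv
    let W : ℕ → ℂ := fun j => if h : j < d + 1 then u ⟨j, h⟩
      else if h' : j - (d + 1) < d + 1 then v ⟨j - (d + 1), h'⟩ else 0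
    have hW : sylv L d A B *ᵥ (fun j => W (j : ℕ)) = 0 := by
      rw [← huv]
      congr 1
      funext j
      have hj := j.isLt
      simp only [W]
      split_ifs with h1 h2
      · rfl
      · rfl
      · omega
    obtain ⟨c, h1, h2⟩ := main W hW
    refine ⟨c, ?_, ?_⟩
    · rw [← h1, Finset.sum_range]
      refine Finset.sum_congr rfl fun k _ => ?_
      have e : W k = u k := by
        simp only [W]
        rw [dif_pos k.isLt]
      rw [e]
    · rw [← h2, Finset.sum_range]
      refine Finset.sum_congr rfl fun k _ => ?_
      have hk := k.isLt
      have e : W (d + 1 + k) = v k := by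
        simp only [W]
        rw [dif_neg (by omega), dif_pos (by omega)]
        congr 1
        exact Fin.ext (by simp)
      rw [e]
end

section
/- Let L ≥ 1, let A, B ∈ ℂ[z] be nonzero with natDegree A ≤ L and natDegree B ≤ L, let D ≤ 1 be an integer, and set K = natDegree(gcd(A, B)) + min(L − natDegree A, L − natDegree B). Then: (1) the extended Sylvester matrix S_D(A, B), with 2L−D+1 rows and 2(L−D+1) columns, has rank 2L−D+1−K, so its left kernel has dimension K; (2) a vector u ∈ ℂ^{2L−D+1} satisfies uᵀ·S_D(A, B) = 0 if and only if hᵀ·Hank_{K+1}(u) = 0, where h ∈ ℂ^{K+1} is given by h[k] = (gcd(A, B)).coeff k for 0 ≤ k ≤ K, and Hank_{K+1}(u) is the (K+1) × (2L−D−K+1) Hankel matrix with entries Hank_{K+1}(u)[i, j] = u[i+j]. -/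
open Polynomial Matrix

/-- the functional on polynomials with coefficients `u` -/
noncomputable def phiF {N : ℕ} (u : Fin N → ℂ) : Polynomial ℂ →ₗ[ℂ] ℂ :=
  ∑ i : Fin N, u i • Polynomial.lcoeff ℂ (i : ℕ)

lemma phiF_apply {N : ℕ} (u : Fin N → ℂ) (p : Polynomial ℂ) :
    phiF u p = ∑ i : Fin N, u i * p.coeff (i : ℕ) := by
  simp [phiF]

lemma phi_mul (φ : Polynomial ℂ →ₗ[ℂ] ℂ) (G : Polynomial ℂ) (n : ℕ) :
    (∀ j < n, φ (G * X ^ j) = 0) ↔ ∀ R : Polynomial ℂ, R.natDegree < n → φ (G * R) = 0 := by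
  constructor
  · intro h R hR
    rw [R.as_sum_range' n hR, Finset.mul_sum, map_sum]
    refine Finset.sum_eq_zero fun j hj => ?_
    rw [← C_mul_X_pow_eq_monomial, ← smul_eq_C_mul, mul_smul_comm, map_smul,
      h j (Finset.mem_range.1 hj), smul_zero]
  · intro h j hj
    exact h _ (by simpa using hj)

lemma sylv_ker (L d : ℕ) (A B : Polynomial ℂ) (u : Fin (L + d + 1) → ℂ) :
    u ᵥ* sylv L d A B = 0 ↔
      (∀ j < d + 1, phiF u (A * X ^ j) = 0) ∧ (∀ j < d + 1, phiF u (B * X ^ j) = 0) := by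
  constructor
  · intro h
    constructor
    · intro j hj
      have := congrFun h ⟨j, by omega⟩
      rw [phiF_apply]
      simp only [Matrix.vecMul, dotProduct, sylv, Matrix.of_apply, Pi.zero_apply] at this
      rw [← this]
      refine Finset.sum_congr rfl fun i _ => ?_
      rw [if_pos (by omega), coeff_mul_X_pow']
    · intro j hj
      have := congrFun h ⟨d + 1 + j, by omega⟩
      rw [phiF_apply]
      simp only [Matrix.vecMul, dotProduct, sylv, Matrix.of_apply, Pi.zero_apply] at this
      rw [← this]
      refine Finset.sum_congr rfl fun i _ => ?_
      rw [if_neg (by omega), coeff_mul_X_pow', Nat.add_sub_cancel_left]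
  · rintro ⟨h1, h2⟩
    ext j
    simp only [Matrix.vecMul, dotProduct, sylv, Matrix.of_apply, Pi.zero_apply]
    by_cases hj : (j : ℕ) ≤ d
    · refine Eq.trans ?_ ((phiF_apply u _).symm.trans (h1 j (by omega)))
      refine Finset.sum_congr rfl fun i _ => ?_
      rw [if_pos hj, coeff_mul_X_pow']
    · refine Eq.trans ?_ ((phiF_apply u _).symm.trans (h2 (j - (d + 1)) (by omega)))
      refine Finset.sum_congr rfl fun i _ => ?_
      rw [if_neg hj, coeff_mul_X_pow']

lemma hank_ker (N K : ℕ) (hKN : K ≤ N) (G : Polynomial ℂ) (hG : G.natDegree ≤ K)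
    (u : Fin N → ℂ) (j : ℕ) (hj : j < N - K) :
    phiF u (G * X ^ j) =
      ∑ k : Fin (K + 1), G.coeff (k : ℕ) * u ⟨(k : ℕ) + j, by have := k.isLt; omega⟩ := by
  rw [phiF_apply]
  symm
  refine Finset.sum_of_injOn (fun k : Fin (K + 1) => (⟨(k : ℕ) + j, by omega⟩ : Fin N)) ?_ ?_ ?_ ?_
  · intro a _ b _ h
    simp only [Fin.mk.injEq] at h
    exact Fin.ext (by omega)
  · intro a _; simp
  · intro i _ hi
    rw [coeff_mul_X_pow']
    split_ifs with hji
    · rw [coeff_eq_zero_of_natDegree_lt, mul_zero]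
      by_contra hc
      apply hi
      refine ⟨⟨(i : ℕ) - j, by omega⟩, by simp, ?_⟩
      exact Fin.ext (by simp; omega)
    · simp
  · intro k _
    simp [coeff_mul_X_pow', mul_comm]

/-- Degree-controlled Bezout, when `A` has the larger degree. -/
lemma bezout_deg (d : ℕ) (a b R : Polynomial ℂ) (ha : a ≠ 0) (hab : IsCoprime a b)
    (hda : a.natDegree ≤ d + 1) (hdb : b.natDegree ≤ d + 1)
    (hR : R.natDegree ≤ d + a.natDegree) :
    ∃ P Q : Polynomial ℂ, P.natDegree ≤ d ∧ Q.natDegree ≤ d ∧ R = a * P + b * Q := by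
  obtain ⟨s, t, hst⟩ := hab
  set Q := (R * t) % a with hQ
  set P := R * s + b * ((R * t) / a) with hP
  have hid : R = a * P + b * Q := by
    have h1 := EuclideanDomain.div_add_mod (R * t) a
    rw [← hQ] at h1
    calc R = R * (s * a + t * b) := by rw [hst, mul_one]
      _ = R * s * a + b * (R * t) := by ring
      _ = R * s * a + b * (a * (R * t / a) + Q) := by rw [h1]
      _ = a * P + b * Q := by rw [hP]; ring
  have hQd : Q.degree < a.degree := EuclideanDomain.mod_lt _ ha
  have hQn : Q = 0 ∨ Q.natDegree < a.natDegree := by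
    by_cases h0 : Q = 0
    · exact Or.inl h0
    · exact Or.inr (natDegree_lt_natDegree h0 hQd)
  refine ⟨P, Q, ?_, ?_, hid⟩
  · by_cases hP0 : P = 0
    · simp [hP0]
    have h1 : a * P = R - b * Q := by rw [hid]; ring
    have h2 : (a * P).natDegree ≤ d + a.natDegree := by
      rw [h1]
      refine (natDegree_sub_le _ _).trans (max_le hR ?_)
      rcases hQn with h | h
      · simp [h]
      · have := natDegree_mul_le (p := b) (q := Q)
        omega
    rw [natDegree_mul ha hP0] at h2
    omega
  · rcases hQn with h | h
    · simp [h]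
    · omega

lemma kill_iff (L d : ℕ) (A B : Polynomial ℂ) (hA : A ≠ 0) (hB : B ≠ 0)
    (hdA : A.natDegree ≤ L) (hdB : B.natDegree ≤ L) (hLd : L ≤ d + 1) (K : ℕ)
    (hK : K = (EuclideanDomain.gcd A B).natDegree
        + min (L - A.natDegree) (L - B.natDegree)) (φ : Polynomial ℂ →ₗ[ℂ] ℂ) :
    ((∀ j < d + 1, φ (A * X ^ j) = 0) ∧ (∀ j < d + 1, φ (B * X ^ j) = 0)) ↔
      ∀ j < L + d + 1 - K, φ (EuclideanDomain.gcd A B * X ^ j) = 0 := by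
  rw [phi_mul, phi_mul, phi_mul]
  have hG0 : EuclideanDomain.gcd A B ≠ 0 := fun h => hA (EuclideanDomain.gcd_eq_zero_iff.1 h).1
  have hcop : ∃ s t, EuclideanDomain.gcd A B = A * s + B * t :=
    ⟨_, _, EuclideanDomain.gcd_eq_gcd_ab A B⟩
  obtain ⟨a, ha⟩ := EuclideanDomain.gcd_dvd_left A B
  obtain ⟨b, hb⟩ := EuclideanDomain.gcd_dvd_right A B
  generalize EuclideanDomain.gcd A B = G at *
  subst ha hb
  have ha0 : a ≠ 0 := right_ne_zero_of_mul hA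
  have hb0 : b ≠ 0 := right_ne_zero_of_mul hB
  rw [natDegree_mul hG0 ha0] at hdA hK
  rw [natDegree_mul hG0 hb0] at hdB hK
  have hab : IsCoprime a b := by
    obtain ⟨s, t, h⟩ := hcop
    refine ⟨s, t, mul_left_cancel₀ hG0 ?_⟩
    calc G * (s * a + t * b) = G * a * s + G * b * t := by ring
      _ = G * 1 := by rw [← h, mul_one]
  constructor
  · rintro ⟨h1, h2⟩ R hR
    have : ∃ P Q : Polynomial ℂ, P.natDegree ≤ d ∧ Q.natDegree ≤ d ∧ R = a * P + b * Q := by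
      rcases le_total b.natDegree a.natDegree with h | h
      · exact bezout_deg d a b R ha0 hab (by omega) (by omega) (by omega)
      · obtain ⟨P, Q, hP, hQ, h⟩ :=
          bezout_deg d b a R hb0 hab.symm (by omega) (by omega) (by omega)
        exact ⟨Q, P, hQ, hP, by rw [h, add_comm]⟩
    obtain ⟨P, Q, hP, hQ, rfl⟩ := this
    rw [mul_add, ← mul_assoc, ← mul_assoc, map_add, h1 P (by omega), h2 Q (by omega), add_zero]
  · intro h
    constructor
    · intro R hR
      rw [mul_assoc]
      have := natDegree_mul_le (p := a) (q := R)
      exact h _ (by omega)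
    · intro R hR
      rw [mul_assoc]
      have := natDegree_mul_le (p := b) (q := R)
      exact h _ (by omega)

/-- Columns are the shifted coefficients of `G`. -/
noncomputable def bandT (N n : ℕ) (G : Polynomial ℂ) : Matrix (Fin N) (Fin n) ℂ :=
  Matrix.of fun i j => (G * X ^ (j : ℕ)).coeff (i : ℕ)

lemma bandT_ker (N n : ℕ) (G : Polynomial ℂ) (u : Fin N → ℂ) :
    u ᵥ* bandT N n G = 0 ↔ ∀ j < n, phiF u (G * X ^ j) = 0 := by
  constructor
  · intro h j hj
    rw [phiF_apply]
    exact congrFun h ⟨j, hj⟩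
  · intro h
    ext j
    have := h j j.isLt
    rw [phiF_apply] at this
    exact this

lemma bandT_rank (N n : ℕ) (G : Polynomial ℂ) (hG : G ≠ 0) (h : G.natDegree + n ≤ N) :
    (bandT N n G).rank = n := by
  have hinj : Function.Injective (bandT N n G).mulVecLin := by
    rw [injective_iff_map_eq_zero]
    intro c hc
    have key : G * ∑ j : Fin n, C (c j) * X ^ (j : ℕ) = 0 := by
      ext i
      rw [coeff_zero]
      by_cases hi : i < N
      · have := congrFun hc ⟨i, hi⟩
        simp only [mulVecLin_apply, Matrix.mulVec, dotProduct, bandT, Matrix.of_apply,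
          Pi.zero_apply] at this
        rw [← this, Finset.mul_sum, finsetSum_coeff]
        refine Finset.sum_congr rfl fun j _ => ?_
        rw [mul_left_comm, coeff_C_mul, mul_comm]
      · rw [Finset.mul_sum, finsetSum_coeff]
        refine Finset.sum_eq_zero fun j _ => ?_
        rw [mul_left_comm, coeff_C_mul, coeff_mul_X_pow', coeff_eq_zero_of_natDegree_lt]
        · simp
        · have := j.isLt
          omega
    have h0 := (mul_eq_zero.1 key).resolve_left hG
    ext j
    have h1 := congrArg (fun p => coeff p (j : ℕ)) h0
    simp only [finsetSum_coeff, coeff_C_mul, coeff_X_pow, coeff_zero] at h1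
    rw [Finset.sum_eq_single j] at h1
    · simpa using h1
    · intro i _ hij
      rw [if_neg (fun e => hij (Fin.ext e.symm)), mul_zero]
    · simp
  rw [Matrix.rank, LinearMap.finrank_range_of_inj hinj]
  simp

lemma rank_eq_of_ker {m n p : ℕ} (S : Matrix (Fin m) (Fin n) ℂ) (T : Matrix (Fin m) (Fin p) ℂ)
    (h : ∀ u, u ᵥ* S = 0 ↔ u ᵥ* T = 0) : S.rank = T.rank := by
  rw [← Matrix.rank_transpose S, ← Matrix.rank_transpose T]
  have h1 := LinearMap.finrank_range_add_finrank_ker Sᵀ.mulVecLin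
  have h2 := LinearMap.finrank_range_add_finrank_ker Tᵀ.mulVecLin
  have h3 : LinearMap.ker Sᵀ.mulVecLin = LinearMap.ker Tᵀ.mulVecLin := by
    ext u
    simp only [LinearMap.mem_ker, mulVecLin_apply, mulVec_transpose, h]
  rw [h3] at h1
  unfold Matrix.rank
  omega

/-- Proposition 3, left kernel of extended Sylvester matrices.
Let `A, B` be nonzero of degree at most `L`, let `D ≤ 1` be an integer with `d = L − D`,
and let `K = natDegree (gcd A B) + min (L − natDegree A) (L − natDegree B)` be the
extended degree of the GCD. Then `S_D(A,B) = sylv L d A B` has rank `2L − D + 1 − K`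
(left kernel of dimension `K`), and a vector `u` lies in the left kernel iff the padded
coefficient vector `h` of the GCD, `h[k] = (gcd A B).coeff k` for `0 ≤ k ≤ K`, satisfies
`hᵀ · Hank_{K+1}(u) = 0`, where `Hank_{K+1}(u)[i,j] = u[i+j]`. -/
theorem sylvester_extended_left_kernel (L : ℕ) (hL : 1 ≤ L)
    (A B : Polynomial ℂ) (hA : A ≠ 0) (hB : B ≠ 0)
    (hdA : A.natDegree ≤ L) (hdB : B.natDegree ≤ L)
    (D : ℤ) (hD : D ≤ 1) (d : ℕ) (hd : (d : ℤ) = (L : ℤ) - D)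
    (K : ℕ)
    (hK : K = (EuclideanDomain.gcd A B).natDegree
        + min (L - A.natDegree) (L - B.natDegree)) :
    (sylv L d A B).rank = L + d + 1 - K
    ∧ ∀ u : Fin (L + d + 1) → ℂ,
        (u ᵥ* sylv L d A B = 0 ↔
          (fun k : Fin (K + 1) => (EuclideanDomain.gcd A B).coeff (k : ℕ)) ᵥ*
            (Matrix.of fun (i : Fin (K + 1)) (j : Fin (L + d + 1 - K)) =>
              u ⟨(i : ℕ) + (j : ℕ), by have hi := i.isLt; have hj := j.isLt; omega⟩)
          = 0) := by
  have hLd : L ≤ d + 1 := by omega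
  have hG0 : EuclideanDomain.gcd A B ≠ 0 := fun h => hA (EuclideanDomain.gcd_eq_zero_iff.1 h).1
  have hGA := natDegree_le_of_dvd (EuclideanDomain.gcd_dvd_left A B) hA
  have hGB := natDegree_le_of_dvd (EuclideanDomain.gcd_dvd_right A B) hB
  have hker : ∀ u, u ᵥ* sylv L d A B = 0 ↔
      ∀ j < L + d + 1 - K, phiF u (EuclideanDomain.gcd A B * X ^ j) = 0 := fun u => by
    rw [sylv_ker, kill_iff L d A B hA hB hdA hdB hLd K hK]
  constructor
  · rw [rank_eq_of_ker _ (bandT (L + d + 1) (L + d + 1 - K) (EuclideanDomain.gcd A B))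
      (fun u => (hker u).trans (bandT_ker _ _ _ u).symm)]
    exact bandT_rank _ _ _ hG0 (by omega)
  · intro u
    rw [hker u]
    constructor
    · intro h
      ext j
      have := h j j.isLt
      rw [hank_ker (L + d + 1) K (by omega) _ (by omega) u j j.isLt] at this
      exact this
    · intro h j hj
      rw [hank_ker (L + d + 1) K (by omega) _ (by omega) u j hj]
      exact congrFun h ⟨j, hj⟩
end

section
/- Let N ≥ 1. The set of pairs of signals (u, v) ∈ (Fin N → ℂ) × (Fin N → ℂ) whose generating polynomials U and V have at least one common root in ℂ (i.e., there exists α ∈ ℂ with U(α) = 0 and V(α) = 0) has Lebesgue measure zero with respect to the product volume measure on (Fin N → ℂ) × (Fin N → ℂ). -/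
open Polynomial MeasureTheory

/-- almost everywhere uniqueness. The set of pairs of signals whose
generating polynomials have at least one common root in `ℂ` has Lebesgue measure zero
in `(Fin N → ℂ) × (Fin N → ℂ)`. -/
theorem measure_common_root_pairs_eq_zero (N : ℕ) (hN : 1 ≤ N) :
    volume {p : (Fin N → ℂ) × (Fin N → ℂ) |
        ∃ α : ℂ, (genPoly N p.1).eval α = 0 ∧ (genPoly N p.2).eval α = 0} = 0 := by
  have : Nonempty (Fin N) := ⟨⟨0, hN⟩⟩
  have hev : ∀ (x : Fin N → ℂ) (α : ℂ),
      (genPoly N x).eval α = ∑ n : Fin N, x n * α ^ (n : ℕ) := by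
    intro x α
    simp [genPoly, eval_finsetSum]
  have hmeas : MeasurableSet {p : (Fin N → ℂ) × (Fin N → ℂ) |
        ∃ α : ℂ, (genPoly N p.1).eval α = 0 ∧ (genPoly N p.2).eval α = 0} := by
    have hcl : IsClosed {q : ((Fin N → ℂ) × (Fin N → ℂ)) × ℂ |
        (∑ n : Fin N, q.1.1 n * q.2 ^ (n : ℕ)) = 0 ∧
        (∑ n : Fin N, q.1.2 n * q.2 ^ (n : ℕ)) = 0} := by
      apply IsClosed.inter
      · exact isClosed_eq (by fun_prop) continuous_const
      · exact isClosed_eq (by fun_prop) continuous_const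
    have hs := (isSigmaCompact_univ.of_isClosed_subset hcl (Set.subset_univ _)).image
      (continuous_fst)
    obtain ⟨K, hK, hKe⟩ := hs
    have : {p : (Fin N → ℂ) × (Fin N → ℂ) |
        ∃ α : ℂ, (genPoly N p.1).eval α = 0 ∧ (genPoly N p.2).eval α = 0} = ⋃ n, K n := by
      rw [hKe]
      ext p
      simp [hev]
    rw [this]
    exact MeasurableSet.iUnion fun n => (hK n).measurableSet
  rw [Measure.volume_eq_prod, Measure.measure_prod_null hmeas]
  have h0 : ∀ᵐ u : Fin N → ℂ, u ≠ 0 := by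
    rw [ae_iff]
    simp
  filter_upwards [h0] with u hu
  have hU : genPoly N u ≠ 0 := by
    intro h
    apply hu
    funext i
    have := congrArg (fun p => p.coeff (i : ℕ)) h
    simpa [genPoly, finsetSum_coeff, coeff_C_mul, coeff_X_pow, Fin.val_inj] using this
  have hsub : Prod.mk u ⁻¹' {p : (Fin N → ℂ) × (Fin N → ℂ) |
        ∃ α : ℂ, (genPoly N p.1).eval α = 0 ∧ (genPoly N p.2).eval α = 0} ⊆
      ⋃ α ∈ (genPoly N u).roots.toFinset, {v | (genPoly N v).eval α = 0} := by
    rintro v ⟨α, h1, h2⟩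
    simp only [Set.mem_iUnion]
    refine ⟨α, ?_, h2⟩
    simp [hU, h1]
  refine measure_mono_null hsub ?_
  refine (measure_biUnion_null_iff (Finset.countable_toSet (genPoly N u).roots.toFinset)).2 ?_
  intro α _
  let W : Submodule ℝ (Fin N → ℂ) :=
    { carrier := {v | (genPoly N v).eval α = 0}
      add_mem' := by
        intro a b ha hb
        simp only [Set.mem_setOf_eq, hev] at *
        simp [add_mul, Finset.sum_add_distrib, ha, hb]
      zero_mem' := by simp [hev]
      smul_mem' := by
        intro c a ha
        simp only [Set.mem_setOf_eq, hev] at *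
        simp [mul_assoc, ← Finset.mul_sum, ha] }
  refine Measure.addHaar_submodule volume W ?_
  intro hW
  have : (Pi.single (⟨0, hN⟩ : Fin N) (1 : ℂ)) ∈ W := by rw [hW]; trivial
  have h2 : (genPoly N (Pi.single (⟨0, hN⟩ : Fin N) (1 : ℂ))).eval α = 0 := this
  rw [hev] at h2
  simp [Pi.single_apply] at h2
end
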